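/- arXiv:math/0512104 — 3 statements merged into one kernel-verified Lean document; each statement's English description precedes it below -/
import Mathlib

section
/- Let I : σ →₀ ℕ be a nonzero multi-index. Then for all a₁, a₂ ∈ R, the Hochschild coboundary of the differential operator ∂^I is given by a₁·∂^I(a₂) − ∂^I(a₁·a₂) + a₂·∂^I(a₁) = −(1/2) · ∑_{0 < J < I} C_{I,J} · ( ∂^J(a₁)·∂^{I−J}(a₂) + ∂^{I−J}(a₁)·∂^J(a₂) ), where the sum ranges over multi-indices J with J ≤ I, J ≠ 0 and J ≠ I. -/
open MvPolynomial

/-- The iterated partial derivative `∂^I` on `MvPolynomial σ K` associated to a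
multi-index `I : σ →₀ ℕ`: the composition, over the finitely many `s` in the
support of `I`, of the `(I s)`-fold iterate of `∂/∂x_s`.  (These operators
commute, so the order of composition is immaterial.) -/
noncomputable def iterPDeriv (K : Type*) [CommRing K] {σ : Type*} (I : σ →₀ ℕ) :
    MvPolynomial σ K →ₗ[K] MvPolynomial σ K :=
  (I.support.toList.map fun s =>
    ((pderiv s : Derivation K (MvPolynomial σ K) (MvPolynomial σ K)) :
        MvPolynomial σ K →ₗ[K] MvPolynomial σ K) ^ (I s)).prod

/-! The Leibniz rule `∂^I(ab) = ∑_{J ≤ I} C_{I,J} ∂^J(a) ∂^{I-J}(b)` holds for a power of a single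
derivation, and it passes from `I` and `I'` to `I + I'` when these have disjoint supports, since
then the multi-indices below `I + I'` are the sums `J + J'` with `J ≤ I` and `J' ≤ I'`, and
`C_{I+I',J+J'} = C_{I,J} C_{I',J'}`. The terms `J = 0` and `J = I` cancel against
`a ∂^I(b) + b ∂^I(a)`. As the coboundary is symmetric in `a` and `b`, it equals the average of the
two resulting sums. -/

open Finset

section MultiIndex

variable {σ : Type*}

/-- The multi-index binomial coefficient `C_{I,J}`. As a product over the support of `I` alone, it
is a meaningful value only for `J ≤ I`. -/
def multiIndexChoose (I J : σ →₀ ℕ) : ℕ :=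
  ∏ s ∈ I.support, (I s).choose (J s)

theorem multiIndexChoose_zero_right (I : σ →₀ ℕ) : multiIndexChoose I 0 = 1 := by
  simp [multiIndexChoose]

theorem multiIndexChoose_self (I : σ →₀ ℕ) : multiIndexChoose I I = 1 := by
  simp [multiIndexChoose]

theorem multiIndexChoose_single {s : σ} {n : ℕ} {J : σ →₀ ℕ} (hJ : J ≤ Finsupp.single s n) :
    multiIndexChoose (Finsupp.single s n) J = n.choose (J s) := by
  rcases eq_or_ne n 0 with rfl | hn
  · have hJs : J s = 0 := by simpa using hJ s
    simp [multiIndexChoose, hJs]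
  · simp [multiIndexChoose, Finsupp.support_single, hn]

theorem multiIndexChoose_add_of_disjoint {I I' J J' : σ →₀ ℕ} (h : Disjoint I I')
    (hJ : J ≤ I) (hJ' : J' ≤ I') :
    multiIndexChoose (I + I') (J + J') = multiIndexChoose I J * multiIndexChoose I' J' := by
  classical
  have hsupp : Disjoint I.support I'.support := Finsupp.disjoint_iff.1 h
  have left_eq {s} (hs : s ∈ I.support) : I' s = 0 ∧ J' s = 0 := by
    have hI' : I' s = 0 := Finsupp.notMem_support_iff.1 (disjoint_left.1 hsupp hs)
    exact ⟨hI', Nat.eq_zero_of_le_zero (hI' ▸ hJ' s)⟩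
  have right_eq {s} (hs : s ∈ I'.support) : I s = 0 ∧ J s = 0 := by
    have hI : I s = 0 := Finsupp.notMem_support_iff.1 (disjoint_right.1 hsupp hs)
    exact ⟨hI, Nat.eq_zero_of_le_zero (hI ▸ hJ s)⟩
  rw [multiIndexChoose, Finsupp.support_add_eq hsupp, prod_union hsupp]
  congr 1 <;> refine prod_congr rfl fun s hs => ?_
  · simp [left_eq hs]
  · simp [right_eq hs]

theorem inf_add_inf_eq_of_disjoint {I I' J : σ →₀ ℕ} (h : Disjoint I I') (hJ : J ≤ I + I') :
    J ⊓ I + J ⊓ I' = J := by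
  ext s
  have hJs : J s ≤ I s + I' s := hJ s
  have hs : min (I s) (I' s) = 0 := DFunLike.congr_fun h.eq_bot s
  simp only [Finsupp.add_apply, Finsupp.inf_apply]
  omega

theorem add_inf_eq_left_of_disjoint {I I' J J' : σ →₀ ℕ} (h : Disjoint I I')
    (hJ : J ≤ I) (hJ' : J' ≤ I') : (J + J') ⊓ I = J := by
  ext s
  have hJs := hJ s
  have hJs' := hJ' s
  have hs : min (I s) (I' s) = 0 := DFunLike.congr_fun h.eq_bot s
  simp only [Finsupp.add_apply, Finsupp.inf_apply]
  omega

theorem add_inf_eq_right_of_disjoint {I I' J J' : σ →₀ ℕ} (h : Disjoint I I')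
    (hJ : J ≤ I) (hJ' : J' ≤ I') : (J + J') ⊓ I' = J' := by
  rw [add_comm, add_inf_eq_left_of_disjoint h.symm hJ' hJ]

variable {M : Type*} [AddCommMonoid M] [DecidableEq σ]

theorem sum_Iic_finsupp_single (s : σ) (n : ℕ) (f : (σ →₀ ℕ) → M) :
    ∑ J ∈ Iic (Finsupp.single s n), f J = ∑ k ∈ range (n + 1), f (Finsupp.single s k) := by
  have single_apply_eq {J} (hJ : J ≤ Finsupp.single s n) : Finsupp.single s (J s) = J :=
    (Finsupp.support_subset_singleton.1
      ((Finsupp.support_mono hJ).trans Finsupp.support_single_subset)).symm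
  refine sum_nbij' (fun J => J s) (Finsupp.single s) (fun J hJ => ?_) (fun k hk => ?_)
    (fun J hJ => single_apply_eq (mem_Iic.1 hJ)) (fun k _ => Finsupp.single_eq_same)
    (fun J hJ => by rw [single_apply_eq (mem_Iic.1 hJ)])
  · simpa [Nat.lt_succ_iff] using mem_Iic.1 hJ s
  · simpa [Nat.lt_succ_iff] using hk

theorem sum_Iic_finsupp_add_of_disjoint {I I' : σ →₀ ℕ} (h : Disjoint I I') (f : (σ →₀ ℕ) → M) :
    ∑ J ∈ Iic (I + I'), f J = ∑ J ∈ Iic I, ∑ J' ∈ Iic I', f (J + J') := by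
  rw [← sum_product']
  refine sum_nbij' (fun J => (J ⊓ I, J ⊓ I')) (fun p => p.1 + p.2) ?_ ?_ ?_ ?_ ?_ <;>
    simp only [mem_product, mem_Iic]
  · exact fun J _ => ⟨inf_le_right, inf_le_right⟩
  · exact fun p hp => add_le_add hp.1 hp.2
  · exact fun J hJ => inf_add_inf_eq_of_disjoint h hJ
  · exact fun p hp => Prod.ext (add_inf_eq_left_of_disjoint h hp.1 hp.2)
      (add_inf_eq_right_of_disjoint h hp.1 hp.2)
  · exact fun J hJ => by rw [inf_add_inf_eq_of_disjoint h hJ]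

end MultiIndex

theorem derivation_pow_apply_mul {R A : Type*} [CommSemiring R] [CommSemiring A] [Algebra R A]
    (D : Derivation R A A) (n : ℕ) (a b : A) :
    ((D : Module.End R A) ^ n) (a * b) = ∑ ij ∈ antidiagonal n,
      n.choose ij.1 • (((D : Module.End R A) ^ ij.1) a * ((D : Module.End R A) ^ ij.2) b) := by
  induction n with
  | zero => simp
  | succ n ih =>
    rw [sum_antidiagonal_choose_succ_nsmul
      (fun i j => ((D : Module.End R A) ^ i) a * ((D : Module.End R A) ^ j) b),
      pow_succ', Module.End.mul_apply, ih, map_sum, ← sum_add_distrib]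
    refine sum_congr rfl fun ij hij => ?_
    have choose_symm : n.choose ij.2 = n.choose ij.1 :=
      (Nat.choose_symm_of_eq_add (mem_antidiagonal.1 hij).symm).symm
    simp only [map_nsmul, Derivation.coeFn_coe, Derivation.leibniz, smul_eq_mul, choose_symm,
      pow_succ', Module.End.mul_apply, nsmul_add, mul_comm (D _)]

section IterPDeriv

variable {K σ : Type*} [CommRing K]

theorem commute_pderiv (s t : σ) :
    Commute (pderiv (R := K) s : Module.End K (MvPolynomial σ K)) (pderiv (R := K) t) := by
  classical
  have lie_eq_zero : ⁅pderiv (R := K) s, pderiv (R := K) t⁆ = 0 :=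
    derivation_ext fun i => by
      simp [Derivation.commutator_apply, pderiv_X, Pi.single_apply, apply_ite]
  rw [commute_iff_lie_eq, ← Derivation.commutator_coe_linear_map, lie_eq_zero]
  rfl

theorem pairwise_commute_pderiv_pow (I : σ → ℕ) (t : Set σ) :
    t.Pairwise
      (Function.onFun Commute
        fun s => (pderiv (R := K) s : Module.End K (MvPolynomial σ K)) ^ I s) :=
  fun s _ s' _ _ => (commute_pderiv s s').pow_pow (I s) (I s')

theorem iterPDeriv_eq_noncommProd {I : σ →₀ ℕ} {t : Finset σ} (h : I.support ⊆ t) :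
    iterPDeriv K I =
      t.noncommProd (fun s => (pderiv (R := K) s : Module.End K (MvPolynomial σ K)) ^ I s)
        (pairwise_commute_pderiv_pow I t) := by
  classical
  obtain ⟨u, hu, rfl⟩ : ∃ u, Disjoint I.support u ∧ I.support ∪ u = t :=
    ⟨t \ I.support, disjoint_sdiff, union_sdiff_of_subset h⟩
  have pow_eq_one {s} (hs : s ∈ u) :
      (pderiv (R := K) s : Module.End K (MvPolynomial σ K)) ^ I s = 1 := by
    rw [Finsupp.notMem_support_iff.1 (disjoint_right.1 hu hs), pow_zero]
  rw [noncommProd_union_of_disjoint hu, noncommProd_eq_pow_card u _ _ 1 fun _ => pow_eq_one,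
    one_pow, mul_one]
  simpa only [iterPDeriv, toList_toFinset] using (noncommProd_toFinset I.support.toList _
    (pairwise_commute_pderiv_pow I _) I.support.nodup_toList).symm

theorem iterPDeriv_zero : iterPDeriv K (0 : σ →₀ ℕ) = LinearMap.id := by
  simp [iterPDeriv, Module.End.one_eq_id]

theorem iterPDeriv_single (s : σ) (n : ℕ) :
    iterPDeriv K (Finsupp.single s n) =
      (pderiv (R := K) s : Module.End K (MvPolynomial σ K)) ^ n := by
  rw [iterPDeriv_eq_noncommProd Finsupp.support_single_subset, noncommProd_singleton,
    Finsupp.single_eq_same]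

theorem iterPDeriv_add (I J : σ →₀ ℕ) :
    iterPDeriv K (I + J) = iterPDeriv K I ∘ₗ iterPDeriv K J := by
  classical
  rw [iterPDeriv_eq_noncommProd (I := I + J) Finsupp.support_add,
    iterPDeriv_eq_noncommProd (I := I) (subset_union_left (s₂ := J.support)),
    iterPDeriv_eq_noncommProd (I := J) (subset_union_right (s₁ := I.support)),
    ← Module.End.mul_eq_comp,
    ← noncommProd_mul_distrib _ _ _ _ fun s _ s' _ _ => (commute_pderiv s s').pow_pow (J s) (I s')]
  exact noncommProd_congr rfl (fun s _ => pow_add _ _ _) _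

variable [DecidableEq σ]

theorem iterPDeriv_single_mul (s : σ) (n : ℕ) (a b : MvPolynomial σ K) :
    iterPDeriv K (Finsupp.single s n) (a * b) =
      ∑ J ∈ Iic (Finsupp.single s n), multiIndexChoose (Finsupp.single s n) J •
        (iterPDeriv K J a * iterPDeriv K (Finsupp.single s n - J) b) := by
  rw [sum_Iic_finsupp_single, iterPDeriv_single, derivation_pow_apply_mul,
    Nat.sum_antidiagonal_eq_sum_range_succ_mk]
  refine sum_congr rfl fun k hk => ?_
  have hkn : Finsupp.single s k ≤ Finsupp.single s n :=
    Finsupp.single_le_single.2 (Nat.lt_succ_iff.1 (mem_range.1 hk))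
  rw [multiIndexChoose_single hkn, Finsupp.single_eq_same, ← Finsupp.single_tsub,
    iterPDeriv_single, iterPDeriv_single]

theorem iterPDeriv_mul (I : σ →₀ ℕ) (a b : MvPolynomial σ K) :
    iterPDeriv K I (a * b) = ∑ J ∈ Iic I,
      multiIndexChoose I J • (iterPDeriv K J a * iterPDeriv K (I - J) b) := by
  induction I using Finsupp.induction with
  | zero =>
    have Iic_zero : Iic (0 : σ →₀ ℕ) = {0} := Iic_bot
    simp [Iic_zero, multiIndexChoose_self, iterPDeriv_zero]
  | single_add s n I hs hn ih =>
    have disj : Disjoint (Finsupp.single s n) I := by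
      simpa [Finsupp.disjoint_iff, Finsupp.support_single, hn] using hs
    rw [iterPDeriv_add, sum_Iic_finsupp_add_of_disjoint disj, LinearMap.comp_apply, ih, map_sum,
      sum_comm]
    simp only [map_nsmul, iterPDeriv_single_mul, smul_sum]
    refine sum_congr rfl fun J hJ => sum_congr rfl fun L hL => ?_
    rw [mem_Iic] at hJ hL
    rw [multiIndexChoose_add_of_disjoint disj hL hJ, ← tsub_add_tsub_comm hL hJ, iterPDeriv_add,
      iterPDeriv_add, LinearMap.comp_apply, LinearMap.comp_apply, smul_smul, mul_comm]

theorem coboundary_iterPDeriv_eq_neg_sum_Ioo {I : σ →₀ ℕ} (hI : I ≠ 0) (a b : MvPolynomial σ K) :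
    a * iterPDeriv K I b - iterPDeriv K I (a * b) + b * iterPDeriv K I a =
      -∑ J ∈ Ioo 0 I, multiIndexChoose I J • (iterPDeriv K J a * iterPDeriv K (I - J) b) := by
  have hIic : Iic I = Icc 0 I := Iic_eq_Icc I
  have hI_pos : 0 < I := pos_iff_ne_zero.2 hI
  rw [iterPDeriv_mul, hIic, ← add_sum_Ico_eq_sum_Icc hI_pos.le, ← add_sum_Ioo_eq_sum_Ico hI_pos]
  simp only [multiIndexChoose_self, multiIndexChoose_zero_right, tsub_self, tsub_zero,
    iterPDeriv_zero, LinearMap.id_apply, one_smul]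
  ring

theorem coboundary_iterPDeriv_general [Invertible (2 : K)] {I : σ →₀ ℕ} (hI : I ≠ 0)
    (a₁ a₂ : MvPolynomial σ K) :
    a₁ * iterPDeriv K I a₂ - iterPDeriv K I (a₁ * a₂) + a₂ * iterPDeriv K I a₁ =
      -(⅟(2 : K) • ∑ J ∈ Ioo 0 I,
          ((∏ s ∈ I.support, (I s).choose (J s) : ℕ) : MvPolynomial σ K) *
            (iterPDeriv K J a₁ * iterPDeriv K (I - J) a₂
              + iterPDeriv K (I - J) a₁ * iterPDeriv K J a₂)) :=
  calc
    _ = ⅟(2 : K) •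
          ((a₁ * iterPDeriv K I a₂ - iterPDeriv K I (a₁ * a₂) + a₂ * iterPDeriv K I a₁) +
            (a₂ * iterPDeriv K I a₁ - iterPDeriv K I (a₂ * a₁) + a₁ * iterPDeriv K I a₂)) := by
      rw [eq_comm, invOf_smul_eq_iff, two_smul, mul_comm a₂ a₁]
      ring
    _ = _ := by
      rw [coboundary_iterPDeriv_eq_neg_sum_Ioo hI, coboundary_iterPDeriv_eq_neg_sum_Ioo hI,
        ← neg_add, smul_neg, ← sum_add_distrib]
      congr! 3 with J
      rw [← smul_add, nsmul_eq_mul, multiIndexChoose, mul_comm (iterPDeriv K J a₂)]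

end IterPDeriv

/-- For a nonzero multi-index `I`, the Hochschild coboundary of `∂^I` is
`a₁·∂^I(a₂) − ∂^I(a₁·a₂) + a₂·∂^I(a₁)
  = −(1/2) ∑_{0 < J < I} C_{I,J} (∂^J(a₁)·∂^{I−J}(a₂) + ∂^{I−J}(a₁)·∂^J(a₂))`,
with `C_{I,J} = ∏_s binomial(I(s), J(s))`. -/
theorem coboundary_iterPDeriv {K : Type*} [Field K] [CharZero K]
    {σ : Type*} [DecidableEq σ] (I : σ →₀ ℕ) (hI : I ≠ 0)
    (a₁ a₂ : MvPolynomial σ K) :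
    a₁ * iterPDeriv K I a₂ - iterPDeriv K I (a₁ * a₂) + a₂ * iterPDeriv K I a₁ =
      -((1 / 2 : K) • ∑ J ∈ Finset.Ioo (0 : σ →₀ ℕ) I,
          ((∏ s ∈ I.support, (I s).choose (J s) : ℕ) : MvPolynomial σ K) *
            (iterPDeriv K J a₁ * iterPDeriv K (I - J) a₂
              + iterPDeriv K (I - J) a₁ * iterPDeriv K J a₂)) := by
  let : Invertible (2 : K) := invertibleOfNonzero two_ne_zero
  rw [one_div, ← invOf_eq_inv]
  exact coboundary_iterPDeriv_general hI a₁ a₂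
end

section
/- Let A be an associative (not necessarily commutative) ring, let n ≥ 1 and let a₁, …, aₙ ∈ A. Let Φ : ℤ[Sₙ] → A be the ℤ-linear map determined on permutations by Φ(σ) = a_{σ(1)}·a_{σ(2)}⋯a_{σ(n)}. Then Φ(eₙ) equals the iterated (left-normed from the right) ring commutator [a₁, [a₂, [ …, [a_{n−1}, aₙ] … ]]], where [x, y] = x·y − y·x. -/
open Equiv

/-- The `k`-cycle `τ_k = (n−k+1, n−k+2, …, n)` in the symmetric group on
`{1, …, n}` (realized `0`-based as a permutation of `Fin n`): it sends
`n−k+1 ↦ n−k+2, …, n−1 ↦ n, n ↦ n−k+1` and fixes all other points.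
(For `k − 1 ≥ n` we set it to `1` by convention.) -/
def tauCycle (n k : ℕ) : Perm (Fin n) :=
  if h : k - 1 < n then
    Fin.revPerm * (Fin.cycleRange (⟨k - 1, h⟩ : Fin n))⁻¹ * Fin.revPerm
  else 1

/-- The Dynkin element `eₙ = (1 − τ₂)(1 − τ₃)⋯(1 − τₙ)` of the integral group
ring `ℤ[Sₙ]`, with `e₁ = 1`. -/
noncomputable def dynkinElement (n : ℕ) : MonoidAlgebra ℤ (Perm (Fin n)) :=
  ((List.range (n - 1)).map fun j =>
    (1 : MonoidAlgebra ℤ (Perm (Fin n)))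
      - MonoidAlgebra.of ℤ (Perm (Fin n)) (tauCycle n (j + 2))).prod

/-- The iterated (left-normed from the right) ring commutator
`[x₁, [x₂, [ …, [x_{m−1}, x_m] … ]]]` of a list `[x₁, …, x_m]`,
where `[x, y] = x·y − y·x`. -/
def listRingCommutator {A : Type*} [Ring A] : List A → A
  | [] => 0
  | [x] => x
  | x :: y :: l => x * listRingCommutator (y :: l) - listRingCommutator (y :: l) * x

/-!
Write `Sₙ` for the stabilizer of the first point in `Sₙ₊₁`. The cycles `τ₂, …, τₙ` move only the
last `n` points, so they come from `Sₙ`, and `eₙ₊₁ = eₙ · (1 − τₙ₊₁)` where `τₙ₊₁` rotates all the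
points. On words, `σ ∈ Sₙ` keeps the letter `a₁` in front, while `σ τₙ₊₁` moves it to the end;
hence `Φ(x(1 − τₙ₊₁)) = [a₁, Ψ(x)]` for `x ∈ ℤ[Sₙ]`, where `Ψ` is the map `Φ` of `a₂, …, aₙ₊₁`.
-/

section ShiftPerm

/-- The embedding of the symmetric group on `n` points into the one on `n + 1` points as the
stabilizer of the first point `0`. -/
noncomputable def shiftPerm (n : ℕ) : Perm (Fin n) →* Perm (Fin (n + 1)) :=
  Perm.viaEmbeddingHom (Fin.succEmb n)

variable {n : ℕ}

@[simp]
theorem shiftPerm_apply_zero (σ : Perm (Fin n)) : shiftPerm n σ 0 = 0 :=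
  Perm.viaEmbedding_apply_of_notMem σ _ 0 (by simp)

@[simp]
theorem shiftPerm_apply_succ (σ : Perm (Fin n)) (i : Fin n) :
    shiftPerm n σ i.succ = (σ i).succ :=
  Perm.viaEmbedding_apply σ (Fin.succEmb n) i

theorem viaEmbedding_castSuccEmb_castSucc (σ : Perm (Fin n)) (i : Fin n) :
    σ.viaEmbedding Fin.castSuccEmb i.castSucc = (σ i).castSucc :=
  Perm.viaEmbedding_apply σ Fin.castSuccEmb i

theorem viaEmbedding_castSuccEmb_last (σ : Perm (Fin n)) :
    σ.viaEmbedding Fin.castSuccEmb (Fin.last n) = Fin.last n :=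
  Perm.viaEmbedding_apply_of_notMem σ _ _ (by simp)

theorem shiftPerm_revPerm_conj (σ : Perm (Fin n)) :
    shiftPerm n (Fin.revPerm * σ * Fin.revPerm) =
      Fin.revPerm * σ.viaEmbedding Fin.castSuccEmb * Fin.revPerm := by
  ext i
  cases i using Fin.cases with
  | zero => simp [viaEmbedding_castSuccEmb_last]
  | succ i => simp [Fin.rev_succ, viaEmbedding_castSuccEmb_castSucc, Fin.rev_castSucc]

theorem tail_comp_shiftPerm {α : Type*} (a : Fin (n + 1) → α) (σ : Perm (Fin n)) :
    Fin.tail (a ∘ shiftPerm n σ) = Fin.tail a ∘ σ := by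
  ext i
  simp [Fin.tail_def]

theorem viaEmbedding_castSuccEmb_cycleRange (i : Fin n) :
    i.cycleRange.viaEmbedding Fin.castSuccEmb = i.castSucc.cycleRange := by
  ext j
  cases j using Fin.lastCases with
  | last =>
    rw [viaEmbedding_castSuccEmb_last, Fin.cycleRange_of_gt i.castSucc_lt_last]
  | cast j =>
    rw [viaEmbedding_castSuccEmb_castSucc, Fin.val_castSucc]
    rcases le_or_gt j i with hji | hij
    · simp [Fin.coe_cycleRange_of_le, hji]
    · simp [Fin.cycleRange_of_gt, hij]

end ShiftPerm

section TauCycle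

variable {n : ℕ}

theorem tauCycle_val_add_one (i : Fin n) :
    tauCycle n (i + 1) = Fin.revPerm * i.cycleRange⁻¹ * Fin.revPerm := by
  simp [tauCycle]

theorem shiftPerm_tauCycle (i : Fin n) :
    shiftPerm n (tauCycle n (i + 1)) = tauCycle (n + 1) (i + 1) := by
  have hinv : i.cycleRange⁻¹.viaEmbedding Fin.castSuccEmb = i.castSucc.cycleRange⁻¹ := by
    rw [← viaEmbedding_castSuccEmb_cycleRange]
    exact map_inv (Perm.viaEmbeddingHom Fin.castSuccEmb) i.cycleRange
  rw [tauCycle_val_add_one, shiftPerm_revPerm_conj, hinv, ← tauCycle_val_add_one, Fin.val_castSucc]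

theorem tauCycle_self (n : ℕ) : tauCycle (n + 1) (n + 1) = finRotate (n + 1) := by
  have hconj : tauCycle (n + 1) (n + 1) = Fin.revPerm * (finRotate (n + 1))⁻¹ * Fin.revPerm := by
    simpa using tauCycle_val_add_one (Fin.last n)
  rw [hconj]
  ext i
  simp [Perm.inv_def, Fin.rev_sub]

theorem dynkinElement_one : dynkinElement 1 = 1 := rfl

theorem dynkinElement_add_two (n : ℕ) :
    dynkinElement (n + 2) =
      MonoidAlgebra.mapDomainAlgHom ℤ ℤ (shiftPerm (n + 1)) (dynkinElement (n + 1)) *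
        (1 - MonoidAlgebra.of ℤ _ (finRotate (n + 2))) := by
  have hshift : ∀ j ∈ List.range n,
      1 - MonoidAlgebra.of ℤ _ (tauCycle (n + 2) (j + 2)) =
        MonoidAlgebra.mapDomainAlgHom ℤ ℤ (shiftPerm (n + 1))
          (1 - MonoidAlgebra.of ℤ _ (tauCycle (n + 1) (j + 2))) := by
    intro j hj
    have hτ := shiftPerm_tauCycle (⟨j + 1, by simpa using hj⟩ : Fin (n + 1))
    rw [map_sub, map_one, ← hτ]
    simp
  simp only [dynkinElement, Nat.add_sub_cancel, Nat.add_succ_sub_one]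
  rw [List.range_succ, List.map_append, List.prod_append, map_list_prod, List.map_map,
    List.map_congr_left hshift, List.map_singleton, List.prod_singleton, tauCycle_self,
    Function.comp_def]

end TauCycle

theorem ofFn_comp_finRotate {α : Type*} {n : ℕ} (b : Fin (n + 1) → α) :
    List.ofFn (b ∘ finRotate (n + 1)) = List.ofFn (Fin.tail b) ++ [b 0] := by
  rw [List.ofFn_succ_last]
  simp [Fin.tail_def, -List.ofFn_succ]

theorem prod_ofFn_comp_shiftPerm {M : Type*} [Monoid M] {n : ℕ} (a : Fin (n + 1) → M)
    (σ : Perm (Fin n)) :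
    (List.ofFn (a ∘ shiftPerm n σ)).prod = a 0 * (List.ofFn (Fin.tail a ∘ σ)).prod := by
  rw [List.ofFn_succ, List.prod_cons, ← tail_comp_shiftPerm, Fin.tail_def, Function.comp_apply,
    shiftPerm_apply_zero]

theorem prod_ofFn_comp_shiftPerm_mul_finRotate {M : Type*} [Monoid M] {n : ℕ}
    (a : Fin (n + 1) → M) (σ : Perm (Fin n)) :
    (List.ofFn (a ∘ ⇑(shiftPerm n σ * finRotate (n + 1)))).prod =
      (List.ofFn (Fin.tail a ∘ σ)).prod * a 0 := by
  rw [Perm.coe_mul, ← Function.comp_assoc, ofFn_comp_finRotate, List.prod_append,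
    List.prod_singleton, tail_comp_shiftPerm, Function.comp_apply, shiftPerm_apply_zero]

section WordEval

variable {R A : Type*} [CommSemiring R] [Semiring A] [Algebra R A] {n : ℕ}

/-- The `R`-linear map `Φ : R[Sₙ] → A` with `Φ(σ) = a_{σ(1)} ⋯ a_{σ(n)}`, defined by its values
on the basis `Sₙ` of the group algebra. -/
noncomputable def wordEval (a : Fin n → A) : MonoidAlgebra R (Perm (Fin n)) →ₗ[R] A :=
  (MonoidAlgebra.basis (Perm (Fin n)) R).constr R fun σ => (List.ofFn (a ∘ σ)).prod

theorem wordEval_single_one (a : Fin n → A) (σ : Perm (Fin n)) :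
    wordEval a (MonoidAlgebra.single σ (1 : R)) = (List.ofFn (a ∘ σ)).prod := by
  rw [← MonoidAlgebra.basis_apply, wordEval, Module.Basis.constr_basis]

theorem wordEval_mapDomain_shiftPerm (a : Fin (n + 1) → A)
    (x : MonoidAlgebra R (Perm (Fin n))) :
    wordEval a (MonoidAlgebra.mapDomainAlgHom R R (shiftPerm n) x) =
      a 0 * wordEval (Fin.tail a) x := by
  suffices wordEval a ∘ₗ (MonoidAlgebra.mapDomainAlgHom R R (shiftPerm n)).toLinearMap =
      LinearMap.mulLeft R (a 0) ∘ₗ wordEval (Fin.tail a) from LinearMap.congr_fun this x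
  refine (MonoidAlgebra.basis _ R).ext fun σ => ?_
  simpa [wordEval_single_one, -List.ofFn_succ] using prod_ofFn_comp_shiftPerm a σ

theorem wordEval_mapDomain_shiftPerm_mul_finRotate (a : Fin (n + 1) → A)
    (x : MonoidAlgebra R (Perm (Fin n))) :
    wordEval a (MonoidAlgebra.mapDomainAlgHom R R (shiftPerm n) x *
        MonoidAlgebra.of R _ (finRotate (n + 1))) =
      wordEval (Fin.tail a) x * a 0 := by
  suffices wordEval a ∘ₗ LinearMap.mulRight R (MonoidAlgebra.of R _ (finRotate (n + 1))) ∘ₗ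
        (MonoidAlgebra.mapDomainAlgHom R R (shiftPerm n)).toLinearMap =
      LinearMap.mulRight R (a 0) ∘ₗ wordEval (Fin.tail a) from LinearMap.congr_fun this x
  refine (MonoidAlgebra.basis _ R).ext fun σ => ?_
  simpa [wordEval_single_one, MonoidAlgebra.single_mul_single, -List.ofFn_succ, -Perm.coe_mul]
    using prod_ofFn_comp_shiftPerm_mul_finRotate a σ

end WordEval

section Ring

variable {A : Type*} [Ring A]

theorem listRingCommutator_cons (x : A) {l : List A} (hl : l ≠ []) :
    listRingCommutator (x :: l) = x * listRingCommutator l - listRingCommutator l * x := by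
  obtain ⟨y, l, rfl⟩ := List.exists_cons_of_ne_nil hl
  rfl

theorem wordEval_dynkinElement {n : ℕ} (a : Fin (n + 1) → A) :
    wordEval a (dynkinElement (n + 1)) = listRingCommutator (List.ofFn a) := by
  induction n with
  | zero => simp [dynkinElement_one, MonoidAlgebra.one_def, wordEval_single_one, listRingCommutator]
  | succ n ih =>
    calc wordEval a (dynkinElement (n + 2))
        = a 0 * wordEval (Fin.tail a) (dynkinElement (n + 1)) -
            wordEval (Fin.tail a) (dynkinElement (n + 1)) * a 0 := by
          rw [dynkinElement_add_two, mul_sub, mul_one, map_sub, wordEval_mapDomain_shiftPerm,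
            wordEval_mapDomain_shiftPerm_mul_finRotate]
      _ = listRingCommutator (a 0 :: List.ofFn (Fin.tail a)) := by
          rw [ih, listRingCommutator_cons _ (by simp)]
      _ = listRingCommutator (List.ofFn a) := by rw [List.ofFn_succ (f := a), Fin.tail_def]

end Ring

/-- Dynkin's theorem in an associative ring: if `Φ : ℤ[Sₙ] → A` is the
ℤ-linear map with `Φ(σ) = a_{σ(1)}·a_{σ(2)}⋯a_{σ(n)}`, then `Φ(eₙ)` is the
iterated commutator `[a₁, [a₂, [ …, [a_{n−1}, aₙ] … ]]]`. -/
theorem dynkinElement_eq_listRingCommutator {A : Type*} [Ring A]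
    {n : ℕ} (hn : 1 ≤ n) (a : Fin n → A)
    (Φ : MonoidAlgebra ℤ (Perm (Fin n)) →ₗ[ℤ] A)
    (hΦ : ∀ σ : Perm (Fin n),
      Φ (MonoidAlgebra.of ℤ (Perm (Fin n)) σ) = (List.ofFn fun i => a (σ i)).prod) :
    Φ (dynkinElement n) = listRingCommutator (List.ofFn a) := by
  obtain ⟨m, rfl⟩ := Nat.exists_eq_add_of_le' hn
  have hΦ_eq : Φ = wordEval a :=
    (MonoidAlgebra.basis _ ℤ).ext fun σ => (hΦ σ).trans (wordEval_single_one a σ).symm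
  rw [hΦ_eq, wordEval_dynkinElement]
end

section
/- Let k ≥ 0 and p ≥ 1. In the integral group ring ℤ[S_k] (multiplication induced by composition of permutations), let A := ∑_{τ ∈ S_k} sgn(τ)·τ and let Sh_p := ∑_{(k₁,…,k_p)} ∑_{σ} sgn(σ)·σ, where the outer sum is over all p-tuples (k₁, …, k_p) of nonnegative integers with k₁ + ⋯ + k_p = k and the inner sum is over all (k₁,…,k_p)-shuffles σ. Then Sh_p · A = p^k · A. -/
open Equiv Finset

/-- The starting offset of the `b`-th block of a composition `c = (k₁, …, k_p)`:
`k₁ + ⋯ + k_{b−1}`. -/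
def blockStart {p : ℕ} (c : Fin p → ℕ) (b : Fin p) : ℕ :=
  ∑ i ∈ Finset.univ.filter (fun i => i < b), c i

/-- The set of `(k₁,…,k_p)`-shuffles in `S_k`: permutations that are (strictly)
increasing on each of the `p` consecutive blocks of sizes `k₁, …, k_p`. -/
def shuffles {k p : ℕ} (c : Fin p → ℕ) : Finset (Perm (Fin k)) :=
  Finset.univ.filter fun σ => ∀ b : Fin p, ∀ s t : Fin k,
    blockStart c b ≤ (s : ℕ) → (s : ℕ) < (t : ℕ) → (t : ℕ) < blockStart c b + c b →
      σ s < σ t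

/-!
Since `σ ↦ sgn(σ)·σ` is multiplicative, `sgn(σ)·σ · A = A` for every single permutation `σ`
(and likewise for any character in place of `sgn`), so only the total number of shuffles matters.
A shuffle `σ` of type `c` is the stable sorting permutation of a unique word with `cᵢ` letters
equal to `i`, namely the weakly increasing such word rearranged by `σ⁻¹`; hence the
shuffles of all types together are as many as the words `Fin k → Fin p`.
-/

theorem single_mul_sum_single {G R : Type*} [Group G] [Fintype G] [Semiring R] (χ : G →* R)
    (g : G) :
    MonoidAlgebra.single g (χ g) * ∑ h, MonoidAlgebra.single h (χ h) =
      ∑ h, MonoidAlgebra.single h (χ h) := by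
  simp_rw [mul_sum, MonoidAlgebra.single_mul_single, ← map_mul]
  exact Equiv.sum_comp (Equiv.mulLeft g) fun h => MonoidAlgebra.single h (χ h)

section FiberCard

variable {α β ι : Type*} [Fintype α] [DecidableEq ι]

/-- The content of a word `f` in the alphabet `ι`: `fiberCard f i` is the number of positions at
which the letter `i` occurs. It gives the block sizes of the shuffle that sorts `f`. -/
def fiberCard (f : α → ι) (i : ι) : ℕ :=
  #{a | f a = i}

theorem sum_fiberCard [Fintype ι] (f : α → ι) : ∑ i, fiberCard f i = Fintype.card α := by
  simp [fiberCard, sum_card_fiberwise_eq_card_filter]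

theorem fiberCard_comp_equiv [Fintype β] (f : β → ι) (e : α ≃ β) :
    fiberCard (f ∘ e) = fiberCard f := by
  funext i
  exact card_equiv e (by simp)

theorem fiberCard_sigma_fst [Fintype ι] (c : ι → ℕ) :
    fiberCard (Sigma.fst : (Σ i, Fin (c i)) → ι) = c := by
  funext i
  rw [fiberCard, ← Fintype.card_subtype, Fintype.card_congr (Equiv.sigmaSubtype i),
    Fintype.card_fin]

end FiberCard

section Shuffles

variable {k p : ℕ}

theorem exists_monotone_fiberCard_eq {c : Fin p → ℕ} (hc : ∑ i, c i = k) :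
    ∃ f : Fin k → Fin p, Monotone f ∧ fiberCard f = c := by
  have e : Fin k ≃ Σ i, Fin (c i) := Fintype.equivOfCardEq (by simp [hc])
  refine ⟨(Sigma.fst ∘ e) ∘ Tuple.sort (Sigma.fst ∘ e), Tuple.monotone_sort _, ?_⟩
  rw [fiberCard_comp_equiv, fiberCard_comp_equiv, fiberCard_sigma_fst]

theorem blockStart_fiberCard (f : Fin k → Fin p) (b : Fin p) :
    blockStart (fiberCard f) b = #{s | f s < b} := by
  simp [blockStart, fiberCard, sum_card_fiberwise_eq_card_filter]

theorem blockStart_fiberCard_add_fiberCard (f : Fin k → Fin p) (b : Fin p) :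
    blockStart (fiberCard f) b + fiberCard f b = #{s | f s ≤ b} := by
  have hdisj : Disjoint ({s | f s < b} : Finset (Fin k)) ({s | f s = b} : Finset (Fin k)) :=
    disjoint_filter.2 fun _ _ hlt => hlt.ne
  simp_rw [blockStart_fiberCard, fiberCard, le_iff_lt_or_eq, filter_or,
    card_union_of_disjoint hdisj]

theorem apply_eq_iff_mem_block {f : Fin k → Fin p} (hf : Monotone f) (s : Fin k) (b : Fin p) :
    f s = b ↔ blockStart (fiberCard f) b ≤ (s : ℕ) ∧
      (s : ℕ) < blockStart (fiberCard f) b + fiberCard f b := by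
  rw [blockStart_fiberCard_add_fiberCard, Tuple.lt_card_le_iff_apply_le_of_monotone hf,
    blockStart_fiberCard, ← not_lt, Tuple.lt_card_lt_iff_apply_lt_of_monotone hf, not_lt,
    and_comm, le_antisymm_iff]

theorem eq_of_monotone_of_fiberCard_eq {f g : Fin k → Fin p} (hf : Monotone f) (hg : Monotone g)
    (hfg : fiberCard f = fiberCard g) : f = g := by
  funext s
  rw [apply_eq_iff_mem_block hf, hfg, ← apply_eq_iff_mem_block hg]

theorem comp_sort_symm_eq_of_monotone {f g : Fin k → Fin p} (hg : Monotone g)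
    (hfg : fiberCard f = fiberCard g) : g ∘ (Tuple.sort f).symm = f := by
  rw [Equiv.comp_symm_eq]
  exact eq_of_monotone_of_fiberCard_eq hg (Tuple.monotone_sort f)
    (by rw [fiberCard_comp_equiv, hfg])

theorem mem_shuffles_fiberCard_iff {f : Fin k → Fin p} (hf : Monotone f) {σ : Perm (Fin k)} :
    σ ∈ shuffles (fiberCard f) ↔ ∀ s t, s < t → f s = f t → σ s < σ t := by
  simp only [shuffles, mem_filter_univ]
  constructor
  · intro hσ s t hst hfst
    exact hσ (f t) s t ((apply_eq_iff_mem_block hf s _).1 hfst).1 hst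
      ((apply_eq_iff_mem_block hf t _).1 rfl).2
  · intro hσ b s t hs hst ht
    have hfs : f s = b := (apply_eq_iff_mem_block hf s b).2 ⟨hs, hst.trans ht⟩
    have hft : f t = b := (apply_eq_iff_mem_block hf t b).2 ⟨hs.trans hst.le, ht⟩
    exact hσ s t hst (hfs.trans hft.symm)

theorem mem_shuffles_fiberCard_iff_eq_sort {f : Fin k → Fin p} (hf : Monotone f)
    {σ : Perm (Fin k)} :
    σ ∈ shuffles (fiberCard f) ↔ σ = Tuple.sort (f ∘ σ.symm) := by
  have hcomp : (f ∘ σ.symm) ∘ σ = f := by ext; simp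
  rw [mem_shuffles_fiberCard_iff hf, Tuple.eq_sort_iff, hcomp, and_iff_right hf]
  simp only [Function.comp_apply, symm_apply_apply]

theorem card_shuffles {c : Fin p → ℕ} (hc : ∑ i, c i = k) :
    #(shuffles (k := k) c) = #{f : Fin k → Fin p | fiberCard f = c} := by
  obtain ⟨h, hmono, rfl⟩ := exists_monotone_fiberCard_eq hc
  refine card_nbij' (fun σ => h ∘ σ.symm) Tuple.sort (fun σ _ => ?_) (fun f hf => ?_)
    (fun σ hσ => ?_) (fun f hf => ?_)
  · simp [fiberCard_comp_equiv]
  · rw [mem_coe, mem_filter_univ] at hf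
    rw [mem_coe, mem_shuffles_fiberCard_iff_eq_sort hmono, comp_sort_symm_eq_of_monotone hmono hf]
  · exact ((mem_shuffles_fiberCard_iff_eq_sort hmono).1 hσ).symm
  · exact comp_sort_symm_eq_of_monotone hmono (by simpa using hf)

theorem sum_card_shuffles (k p : ℕ) :
    ∑ c ∈ Nat.antidiagonalTuple p k, #(shuffles (k := k) c) = p ^ k := by
  calc ∑ c ∈ Nat.antidiagonalTuple p k, #(shuffles (k := k) c)
      = ∑ c ∈ Nat.antidiagonalTuple p k, #{f : Fin k → Fin p | fiberCard f = c} :=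
        sum_congr rfl fun c hc => card_shuffles (Nat.mem_antidiagonalTuple.1 hc)
    _ = #(univ : Finset (Fin k → Fin p)) :=
        (card_eq_sum_card_fiberwise fun f _ => by
          simp [Nat.mem_antidiagonalTuple, sum_fiberCard]).symm
    _ = p ^ k := by simp

theorem signedShuffleSum_mul_alternatingSum_general {R : Type*} [Semiring R]
    (χ : Perm (Fin k) →* R) :
    (∑ c ∈ Nat.antidiagonalTuple p k, ∑ σ ∈ shuffles (k := k) c,
        MonoidAlgebra.single σ (χ σ)) * ∑ τ, MonoidAlgebra.single τ (χ τ) =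
      p ^ k • ∑ τ, MonoidAlgebra.single τ (χ τ) := by
  simp_rw [sum_mul, single_mul_sum_single, sum_const]
  rw [← sum_smul, sum_card_shuffles]

end Shuffles

/-- In `ℤ[S_k]`, with `A = ∑_{τ ∈ S_k} sgn(τ)·τ` and
`Sh_p = ∑_{(k₁,…,k_p), ∑kᵢ = k} ∑_{σ a (k₁,…,k_p)-shuffle} sgn(σ)·σ`, one has
`Sh_p · A = p^k · A`. -/
theorem signedShuffleSum_mul_alternatingSum {k p : ℕ} (hp : 1 ≤ p) :
    (∑ c ∈ Finset.Nat.antidiagonalTuple p k, ∑ σ ∈ shuffles (k := k) c,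
        MonoidAlgebra.single σ ((Perm.sign σ : ℤ))) *
      (∑ τ : Perm (Fin k), MonoidAlgebra.single τ ((Perm.sign τ : ℤ)))
    = (p : ℤ) ^ k •
        ∑ τ : Perm (Fin k), MonoidAlgebra.single τ ((Perm.sign τ : ℤ)) := by
  simpa [← natCast_zsmul] using signedShuffleSum_mul_alternatingSum_general (p := p)
    ((Units.coeHom ℤ).comp (Perm.sign (α := Fin k)))
end
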